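/- Let A = S_A + v_A and B = S_B + v_B be n/2-dimensional balanced affine subspaces of 𝔽₂^{3n/4} with dim(A₀∩B₀) = n/2 − 2 and dim(A₁∩B₁) = n/2 − 2 (so dim(A∩B) = n/2 − 1, viewing intersections of cosets as affine subspaces). Then for any fixed pair (b, s) with the property that s ∉ S_A + v_A when b = 0 (respectively s ∉ S_A^⊥ when b = 1), the probability over a uniformly random such B (given fixed A) that s ∈ S_B + v_B (resp. s ∈ S_B^⊥) is at most 2^{−n/4}. -/

import Mathlib

open scoped BigOperators

namespace Stmt10

/-- The 𝔽₂ inner product. -/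
def dotp {ι : Type*} [Fintype ι] (s t : ι → ZMod 2) : ZMod 2 := ∑ i, s i * t i

/-- The dual (orthogonal complement) S^⊥ of a subspace. -/
def perp {ι : Type*} [Fintype ι] (S : Submodule (ZMod 2) (ι → ZMod 2)) :
    Set (ι → ZMod 2) :=
  {t | ∀ x ∈ S, dotp t x = 0}

/-- The coset S + v as a set. -/
def coset {ι : Type*} (S : Submodule (ZMod 2) (ι → ZMod 2)) (v : ι → ZMod 2) :
    Set (ι → ZMod 2) :=
  {x | x - v ∈ S}

/-- The part of the coset S + v whose coordinate i₀ equals b. -/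
def cosetPart {ι : Type*} (S : Submodule (ZMod 2) (ι → ZMod 2)) (v : ι → ZMod 2)
    (i₀ : ι) (b : ZMod 2) : Set (ι → ZMod 2) :=
  {x | x - v ∈ S ∧ x i₀ = b}

/-- B = (S_B, v_B) is related to A = (S_A, v_A): B is a balanced n/2-dimensional affine
subspace of 𝔽₂^{3n/4} with |A₀ ∩ B₀| = |A₁ ∩ B₁| = 2^{n/2−2}. -/
def Rel (n m : ℕ) [NeZero m] (SA : Submodule (ZMod 2) (Fin m → ZMod 2))
    (vA : Fin m → ZMod 2) (B : Submodule (ZMod 2) (Fin m → ZMod 2) × (Fin m → ZMod 2)) :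
    Prop :=
  Module.finrank (ZMod 2) B.1 = n / 2 ∧
  Nat.card (cosetPart B.1 B.2 0 0) * 2 = Nat.card (coset B.1 B.2) ∧
  Nat.card ↥(cosetPart SA vA 0 0 ∩ cosetPart B.1 B.2 0 0) = 2 ^ (n / 2 - 2) ∧
  Nat.card ↥(cosetPart SA vA 0 1 ∩ cosetPart B.1 B.2 0 1) = 2 ^ (n / 2 - 2)

/-!
Affine automorphisms of `𝔽₂^m` preserving `A₀` and `A₁` permute the `B` related to `A`. If such
automorphisms carry `s` to every `t` in some set `N`, then `s` lies in `B` at most as often as an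
average `t ∈ N` does, and double counting bounds this by the largest density of a `B` in `N`; the
same applies to `S_B^⊥`. Shears `x ↦ x + g x • w` allow `N` to be half of the space:

* If `s ∉ A`, choose an affine `g` vanishing on `A` with `g s = 1` and let `N = {t | g t = 1}`.
  The shear `x ↦ x + g x • (t - s)` fixes `A` pointwise and carries `s` to `t`. At least half of `B`
  lies in `A`, hence at most half of it in `N`.
* If `s ∉ S_A^⊥`, choose `w ∈ S_A` with first coordinate `0` and `s ⬝ᵥ w = 1`, and let
  `N = {t | t ⬝ᵥ w = 1}`. The shear `x ↦ x + ((s - t) ⬝ᵥ x) • w` preserves `A₀` and `A₁`, and its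
  transpose carries `t` to `s`. At most half of `S_B^⊥` lies in `N`.
-/

section Counting

lemma ncard_mul_ncard_le_of_forall_le {X Y : Type*} [Finite X] [Finite Y] (r : X → Y → Prop)
    {G : Set X} {N : Set Y} {a c : ℕ} (ha : ∀ t ∈ N, a ≤ {x ∈ G | r x t}.ncard)
    (hc : ∀ x ∈ G, {t ∈ N | r x t}.ncard ≤ c) : a * N.ncard ≤ G.ncard * c := by
  classical
  lift G to Finset X using Set.toFinite G
  lift N to Finset Y using Set.toFinite N
  rw [mul_comm, Set.ncard_coe_finset, Set.ncard_coe_finset]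
  refine Finset.card_mul_le_card_mul (fun t x => r x t) (fun t ht => ?_) fun x hx => ?_
  · rw [← Set.ncard_coe_finset, Finset.coe_bipartiteAbove]
    exact ha t ht
  · rw [← Set.ncard_coe_finset, Finset.coe_bipartiteBelow]
    exact hc x hx

lemma two_mul_ncard_inter_preimage {X : Type*} [Finite X] {Q : Set X} {g : X → ZMod 2}
    (e : Equiv.Perm X) (hQ : ∀ x, e x ∈ Q ↔ x ∈ Q) (hg : ∀ x, g (e x) = g x + 1) (b : ZMod 2) :
    2 * (Q ∩ g ⁻¹' {b}).ncard = Q.ncard := by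
  have hflip : ∀ c d : ZMod 2, c + 1 = d ↔ c ≠ d := by decide
  have hcompl : e ⁻¹' (Q ∩ g ⁻¹' {b}) = Q \ g ⁻¹' {b} := by
    ext x
    simp [hQ, hg, hflip]
  have hcard : (Q \ g ⁻¹' {b}).ncard = (Q ∩ g ⁻¹' {b}).ncard := by
    rw [← hcompl, Set.ncard_preimage_of_injective_subset_range e.injective (by simp)]
  have hsum := Set.ncard_inter_add_ncard_sdiff_eq_ncard Q (g ⁻¹' {b})
  omega

end Counting

section Affine

variable {K V : Type*} [Ring K] [AddCommGroup V] [Module K V]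

/-- The affine shear `x ↦ x + g x • w` along a direction `w` on which the affine functional `g` is
constant: the affine counterpart of a transvection. -/
def shear (g : V →ᵃ[K] K) {w : V} (hw : g.linear w = 0) : V ≃ᵃ[K] V :=
  (LinearEquiv.transvection hw).toAffineEquiv.trans (AffineEquiv.constVAdd K V (g 0 • w))

lemma shear_apply (g : V →ᵃ[K] K) {w : V} (hw : g.linear w = 0) (x : V) :
    shear g hw x = x + g x • w := by
  have hg : g x = g.linear x + g 0 := congrFun g.decomp x
  have hx : shear g hw x = g 0 • w + (x + g.linear x • w) := rfl
  rw [hx, hg, add_smul]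
  abel

lemma shear_linear_apply (g : V →ᵃ[K] K) {w : V} (hw : g.linear w = 0) (x : V) :
    (shear g hw).linear x = x + g.linear x • w := rfl

/-- The image of the affine subspace `S + v`, encoded as the pair `(S, v)`, under an affine
automorphism. -/
def mapCoset (φ : V ≃ᵃ[K] V) (B : Submodule K V × V) : Submodule K V × V :=
  (B.1.map φ.linear.toLinearMap, φ B.2)

lemma mapCoset_injective (φ : V ≃ᵃ[K] V) : Function.Injective (mapCoset φ) := by
  rintro ⟨S, v⟩ ⟨S', v'⟩ h
  rw [mapCoset, mapCoset, Prod.mk.injEq] at h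
  exact Prod.ext (Submodule.map_injective_of_injective φ.linear.injective h.1) (φ.injective h.2)

lemma two_mul_ncard_affineMap_eq [Module (ZMod 2) V] [Finite V] (g : V →ᵃ[ZMod 2] ZMod 2) {u : V}
    (hu : g.linear u = 1) (b : ZMod 2) : 2 * {t | g t = b}.ncard = Nat.card V := by
  have hg : ∀ x, g (x + u) = g x + 1 := fun x => by
    rw [add_comm x, ← vadd_eq_add, g.map_vadd, hu, vadd_eq_add, add_comm]
  have h := two_mul_ncard_inter_preimage (Q := Set.univ) (Equiv.addRight u) (fun _ => Iff.rfl) hg b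
  rwa [Set.univ_inter, Set.ncard_univ] at h

end Affine

section Coset

variable {ι : Type*} {S : Submodule (ZMod 2) (ι → ZMod 2)} {v s : ι → ZMod 2} {i : ι}

lemma map_mem_coset_mapCoset (φ : (ι → ZMod 2) ≃ᵃ[ZMod 2] (ι → ZMod 2))
    (B : Submodule (ZMod 2) (ι → ZMod 2) × (ι → ZMod 2)) (x : ι → ZMod 2) :
    φ x ∈ coset (mapCoset φ B).1 (mapCoset φ B).2 ↔ x ∈ coset B.1 B.2 := by
  have h : φ x - φ B.2 = φ.linear (x - B.2) := (φ.toAffineMap.linearMap_vsub x B.2).symm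
  change φ x - φ B.2 ∈ B.1.map φ.linear.toLinearMap ↔ x - B.2 ∈ B.1
  rw [h]
  exact φ.linear.injective.mem_set_image (s := (B.1 : Set (ι → ZMod 2)))

lemma ncard_coset [Finite ι] (S : Submodule (ZMod 2) (ι → ZMod 2)) (v : ι → ZMod 2) :
    (coset S v).ncard = 2 ^ Module.finrank (ZMod 2) S := by
  have h : Nat.card (coset S v) = Nat.card S :=
    Nat.card_congr ((Equiv.subRight v).subtypeEquiv fun x => Iff.rfl)
  rw [← Nat.card_coe_set_eq, h, Module.natCard_eq_pow_finrank (K := ZMod 2), Nat.card_zmod]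

lemma two_mul_ncard_cosetPart [Finite ι] (h₀ : (cosetPart S v i 0).Nonempty)
    (h₁ : (cosetPart S v i 1).Nonempty) (b : ZMod 2) :
    2 * (cosetPart S v i b).ncard = (coset S v).ncard := by
  obtain ⟨x, hx, hx0⟩ := h₀
  obtain ⟨y, hy, hy1⟩ := h₁
  have hxy : y - x ∈ S := by simpa using S.sub_mem hy hx
  refine two_mul_ncard_inter_preimage (g := fun z => z i) (Equiv.addRight (y - x))
    (fun z => ?_) (fun z => by simp [hx0, hy1]) b
  change z + (y - x) - v ∈ S ↔ z - v ∈ S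
  rw [add_sub_right_comm, S.add_mem_iff_left hxy]

lemma exists_affineMap_eq_one_of_notMem_coset (hs : s ∉ coset S v) :
    ∃ g : (ι → ZMod 2) →ᵃ[ZMod 2] ZMod 2, (∀ x ∈ coset S v, g x = 0) ∧ g s = 1 := by
  obtain ⟨f, hfS, hfs⟩ :=
    LinearMap.exists_extend_of_notMem (0 : S →ₗ[ZMod 2] ZMod 2) hs 1
  refine ⟨f.toAffineMap - AffineMap.const (ZMod 2) _ (f v), fun x hx => ?_, ?_⟩
  · simpa using LinearMap.congr_fun hfS ⟨x - v, hx⟩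
  · simpa using hfs

lemma shear_mem_cosetPart_of_eq_zero {g : (ι → ZMod 2) →ᵃ[ZMod 2] ZMod 2} {w : ι → ZMod 2}
    (hw : g.linear w = 0) (hg : ∀ x ∈ coset S v, g x = 0) (b : ZMod 2) (x : ι → ZMod 2) :
    shear g hw x ∈ cosetPart S v i b ↔ x ∈ cosetPart S v i b := by
  have hinv : g (shear g hw x) = g x := by
    rw [shear_apply, add_comm, ← vadd_eq_add, g.map_vadd, map_smul, hw, smul_zero, zero_vadd]
  have hfix : g x = 0 → shear g hw x = x := fun hx => by simp [shear_apply, hx]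
  constructor <;> intro hx
  · rwa [← hfix (hinv ▸ hg _ hx.1)]
  · rwa [hfix (hg x hx.1)]

lemma shear_mem_cosetPart_of_mem {g : (ι → ZMod 2) →ᵃ[ZMod 2] ZMod 2} {w : ι → ZMod 2}
    (hw : g.linear w = 0) (hwS : w ∈ S) (hwi : w i = 0) (b : ZMod 2) (x : ι → ZMod 2) :
    shear g hw x ∈ cosetPart S v i b ↔ x ∈ cosetPart S v i b := by
  have hmem : x + g x • w - v ∈ S ↔ x - v ∈ S := by
    rw [add_sub_right_comm, S.add_mem_iff_left (S.smul_mem _ hwS)]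
  simp [shear_apply, cosetPart, hmem, hwi]

end Coset

section Perp

variable {ι : Type*} [Fintype ι] {S : Submodule (ZMod 2) (ι → ZMod 2)} {s w y : ι → ZMod 2}
  {i : ι}

lemma coe_comap_dualAnnihilator [DecidableEq ι] (S : Submodule (ZMod 2) (ι → ZMod 2)) :
    (S.dualAnnihilator.comap (dotProductEquiv (ZMod 2) ι).toLinearMap : Set (ι → ZMod 2)) =
      perp S := by
  ext t
  simp only [Submodule.comap_coe, Set.mem_preimage, SetLike.mem_coe,
    Submodule.mem_dualAnnihilator]
  rfl

lemma ncard_perp (S : Submodule (ZMod 2) (ι → ZMod 2)) :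
    (perp S).ncard = 2 ^ (Fintype.card ι - Module.finrank (ZMod 2) S) := by
  classical
  have hdim := Subspace.finrank_add_finrank_dualAnnihilator_eq S
  rw [Module.finrank_fintype_fun_eq_card] at hdim
  have hcard : (perp S).ncard = Nat.card S.dualAnnihilator := by
    rw [← coe_comap_dualAnnihilator, Submodule.comap_coe]
    exact Set.ncard_preimage_of_injective_subset_range (dotProductEquiv (ZMod 2) ι).injective
      (by simp)
  rw [hcard, Module.natCard_eq_pow_finrank (K := ZMod 2), Nat.card_zmod, ← hdim,
    Nat.add_sub_cancel_left]

lemma two_mul_ncard_perp_dotProduct_eq_one_le (S : Submodule (ZMod 2) (ι → ZMod 2))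
    (w : ι → ZMod 2) : 2 * {t | t ⬝ᵥ w = 1 ∧ t ∈ perp S}.ncard ≤ (perp S).ncard := by
  classical
  rcases Set.eq_empty_or_nonempty {t | t ⬝ᵥ w = 1 ∧ t ∈ perp S} with hempty | ⟨u, huw, hu⟩
  · simp [hempty]
  · have hperp : ∀ x, x + u ∈ perp S ↔ x ∈ perp S := by
      rw [← coe_comap_dualAnnihilator] at hu ⊢
      exact fun x => Submodule.add_mem_iff_left _ hu
    rw [← two_mul_ncard_inter_preimage (g := (· ⬝ᵥ w)) (Equiv.addRight u) hperp
      (fun x => by simp [huw]) 1, Set.inter_comm]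
    rfl

lemma exists_mem_dotProduct_eq_one (hs : s ∉ perp S) (hy : y ∈ S) (hyi : y i = 1)
    (hsy : s ⬝ᵥ y = 0) : ∃ w ∈ S, w i = 0 ∧ s ⬝ᵥ w = 1 := by
  obtain ⟨z, hz, hsz⟩ : ∃ z ∈ S, s ⬝ᵥ z ≠ 0 := by
    by_contra! h
    exact hs h
  refine ⟨z - z i • y, S.sub_mem hz (S.smul_mem _ hy), by simp [hyi], ?_⟩
  have hsz : s ⬝ᵥ z = 1 := Fin.eq_one_of_ne_zero _ hsz
  simp [hsy, hsz]

end Perp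

section Related

variable {n m : ℕ} [NeZero m] {SA : Submodule (ZMod 2) (Fin m → ZMod 2)}
  {vA s : Fin m → ZMod 2} {B : Submodule (ZMod 2) (Fin m → ZMod 2) × (Fin m → ZMod 2)}

lemma Rel.ncard_cosetPart_inter (h : Rel n m SA vA B) :
    ∀ b : ZMod 2, (cosetPart SA vA 0 b ∩ cosetPart B.1 B.2 0 b).ncard = 2 ^ (n / 2 - 2) :=
  Fin.forall_fin_two.2 h.2.2

lemma Rel.nonempty_inter (h : Rel n m SA vA B) (b : ZMod 2) :
    (cosetPart SA vA 0 b ∩ cosetPart B.1 B.2 0 b).Nonempty :=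
  Set.nonempty_of_ncard_ne_zero <| h.ncard_cosetPart_inter b ▸ (Nat.two_pow_pos _).ne'

lemma Rel.exists_common_direction (h : Rel n m SA vA B) : ∃ y ∈ SA, y ∈ B.1 ∧ y 0 = 1 := by
  obtain ⟨x, ⟨hxA, hx0⟩, hxB, -⟩ := h.nonempty_inter 0
  obtain ⟨y, ⟨hyA, hy1⟩, hyB, -⟩ := h.nonempty_inter 1
  exact ⟨y - x, by simpa using SA.sub_mem hyA hxA, by simpa using B.1.sub_mem hyB hxB,
    by simp [hx0, hy1]⟩

lemma Rel.map (h : Rel n m SA vA B) (φ : (Fin m → ZMod 2) ≃ᵃ[ZMod 2] (Fin m → ZMod 2))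
    (hφ : ∀ b x, φ x ∈ cosetPart SA vA 0 b ↔ x ∈ cosetPart SA vA 0 b) :
    Rel n m SA vA (mapCoset φ B) := by
  set B' := mapCoset φ B
  have hpre : ∀ b, φ ⁻¹' (cosetPart SA vA 0 b ∩ cosetPart B'.1 B'.2 0 b) =
      cosetPart SA vA 0 b ∩ cosetPart B.1 B.2 0 b := by
    intro b
    ext x
    have hB : φ x - B'.2 ∈ B'.1 ↔ x - B.2 ∈ B.1 := map_mem_coset_mapCoset φ B x
    have hA := hφ b x
    simp only [cosetPart, Set.mem_preimage, Set.mem_inter_iff, Set.mem_ofPred_eq] at hA ⊢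
    tauto
  have hcard : ∀ b, (cosetPart SA vA 0 b ∩ cosetPart B'.1 B'.2 0 b).ncard = 2 ^ (n / 2 - 2) := by
    intro b
    rw [← h.ncard_cosetPart_inter b, ← hpre,
      Set.ncard_preimage_of_injective_subset_range φ.injective (by simp [φ.surjective.range_eq])]
  have hne : ∀ b, (cosetPart B'.1 B'.2 0 b).Nonempty := fun b =>
    (Set.nonempty_of_ncard_ne_zero (hcard b ▸ (Nat.two_pow_pos _).ne')).mono
      Set.inter_subset_right
  refine ⟨?_, ?_, hcard 0, hcard 1⟩
  · rw [← h.1]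
    exact LinearEquiv.finrank_map_eq φ.linear B.1
  · rw [mul_comm]
    exact two_mul_ncard_cosetPart (hne 0) (hne 1) 0

lemma Rel.ncard_coset_le_two_mul (h : Rel n m SA vA B) :
    (coset B.1 B.2).ncard ≤ 2 * (coset SA vA ∩ coset B.1 B.2).ncard := by
  have hdisj : Disjoint (cosetPart SA vA 0 0 ∩ cosetPart B.1 B.2 0 0)
      (cosetPart SA vA 0 1 ∩ cosetPart B.1 B.2 0 1) :=
    Set.disjoint_left.2 fun x hx hx' => zero_ne_one (hx.1.2.symm.trans hx'.1.2)
  have hsub : (cosetPart SA vA 0 0 ∩ cosetPart B.1 B.2 0 0) ∪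
      (cosetPart SA vA 0 1 ∩ cosetPart B.1 B.2 0 1) ⊆ coset SA vA ∩ coset B.1 B.2 := by
    rintro x (hx | hx) <;> exact ⟨hx.1.1, hx.2.1⟩
  have hle := Set.ncard_le_ncard hsub
  rw [Set.ncard_union_eq hdisj, h.ncard_cosetPart_inter, h.ncard_cosetPart_inter] at hle
  calc (coset B.1 B.2).ncard = 2 ^ (n / 2) := by rw [ncard_coset, h.1]
    _ ≤ 2 ^ (n / 2 - 2 + 2) := Nat.pow_le_pow_right two_pos (by omega)
    _ = 2 * (2 ^ (n / 2 - 2) + 2 ^ (n / 2 - 2)) := by ring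
    _ ≤ 2 * (coset SA vA ∩ coset B.1 B.2).ncard := Nat.mul_le_mul_left 2 hle

lemma Rel.two_mul_ncard_eq_one_le (h : Rel n m SA vA B) {g : (Fin m → ZMod 2) → ZMod 2}
    (hg : ∀ x ∈ coset SA vA, g x = 0) :
    2 * {t | g t = 1 ∧ t ∈ coset B.1 B.2}.ncard ≤ (coset B.1 B.2).ncard := by
  have hdisj : Disjoint {t | g t = 1 ∧ t ∈ coset B.1 B.2} (coset SA vA ∩ coset B.1 B.2) :=
    Set.disjoint_left.2 fun x hx hx' => zero_ne_one ((hg x hx'.1).symm.trans hx.1)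
  have hle := Set.ncard_le_ncard (Set.union_subset (fun x hx => hx.2) Set.inter_subset_right :
    {t | g t = 1 ∧ t ∈ coset B.1 B.2} ∪ (coset SA vA ∩ coset B.1 B.2) ⊆ coset B.1 B.2)
  rw [Set.ncard_union_eq hdisj] at hle
  have hhalf := h.ncard_coset_le_two_mul
  omega

lemma card_rel_and_mul_two_pow_le {c d : ℕ} (hcd : c + d ≤ m) {N : Set (Fin m → ZMod 2)}
    (P : Submodule (ZMod 2) (Fin m → ZMod 2) × (Fin m → ZMod 2) → (Fin m → ZMod 2) → Prop)
    (hN : 2 * N.ncard = 2 ^ m)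
    (hmap : ∀ t ∈ N, ∃ φ : (Fin m → ZMod 2) ≃ᵃ[ZMod 2] (Fin m → ZMod 2),
      (∀ b x, φ x ∈ cosetPart SA vA 0 b ↔ x ∈ cosetPart SA vA 0 b) ∧
        ∀ B, P B s → P (mapCoset φ B) t)
    (hd : ∀ B, Rel n m SA vA B → 2 * {t | t ∈ N ∧ P B t}.ncard ≤ 2 ^ d) :
    Nat.card {B // Rel n m SA vA B ∧ P B s} * 2 ^ c ≤ Nat.card {B // Rel n m SA vA B} := by
  change {B | Rel n m SA vA B ∧ P B s}.ncard * 2 ^ c ≤ {B | Rel n m SA vA B}.ncard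
  set related := {B | Rel n m SA vA B}
  set good := {B | Rel n m SA vA B ∧ P B s}
  have hcount : good.ncard * N.ncard ≤ related.ncard * (2 ^ d / 2) := by
    refine ncard_mul_ncard_le_of_forall_le P (fun t ht => ?_) fun B hB => ?_
    · obtain ⟨φ, hφA, hφP⟩ := hmap t ht
      exact Set.ncard_le_ncard_of_injOn (mapCoset φ)
        (fun B hB => ⟨hB.1.map φ hφA, hφP B hB.2⟩) (mapCoset_injective φ).injOn
    · rw [Nat.le_div_iff_mul_le two_pos, mul_comm]
      exact hd B hB
  refine Nat.le_of_mul_le_mul_right (c := 2 ^ d) ?_ (Nat.two_pow_pos d)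
  calc good.ncard * 2 ^ c * 2 ^ d = good.ncard * 2 ^ (c + d) := by rw [mul_assoc, ← pow_add]
    _ ≤ good.ncard * 2 ^ m := Nat.mul_le_mul_left _ (Nat.pow_le_pow_right two_pos hcd)
    _ = 2 * (good.ncard * N.ncard) := by rw [← hN]; ring
    _ ≤ 2 * (related.ncard * (2 ^ d / 2)) := Nat.mul_le_mul_left 2 hcount
    _ = related.ncard * (2 * (2 ^ d / 2)) := by ring
    _ ≤ related.ncard * 2 ^ d := Nat.mul_le_mul_left _ (Nat.mul_div_le _ 2)

theorem card_rel_mem_coset_mul_two_pow_le {c : ℕ} (hc : c + n / 2 ≤ m) (hs : s ∉ coset SA vA) :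
    Nat.card {B // Rel n m SA vA B ∧ s ∈ coset B.1 B.2} * 2 ^ c ≤
      Nat.card {B // Rel n m SA vA B} := by
  obtain ⟨g, hgA, hgs⟩ := exists_affineMap_eq_one_of_notMem_coset hs
  have hlinear : ∀ x y, g.linear (x - y) = g x - g y := g.linearMap_vsub
  refine card_rel_and_mul_two_pow_le hc (fun B t => t ∈ coset B.1 B.2) (N := {t | g t = 1})
    ?_ (fun t ht => ?_) fun B hB => ?_
  · have hvA : g vA = 0 := hgA vA (by simp [coset])
    have hu : g.linear (s - vA) = 1 := by rw [hlinear, hgs, hvA, sub_zero]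
    simpa using two_mul_ncard_affineMap_eq g hu 1
  · have hw : g.linear (t - s) = 0 := by rw [hlinear, ht, hgs, sub_self]
    have hst : shear g hw s = t := by rw [shear_apply, hgs, one_smul, add_sub_cancel]
    refine ⟨shear g hw, shear_mem_cosetPart_of_eq_zero hw hgA, fun B hsB => ?_⟩
    have hmem := (map_mem_coset_mapCoset (shear g hw) B s).2 hsB
    rwa [hst] at hmem
  · exact (hB.two_mul_ncard_eq_one_le hgA).trans_eq (by rw [ncard_coset, hB.1])

theorem card_rel_mem_perp_mul_two_pow_le (hs : s ∉ perp SA) :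
    Nat.card {B // Rel n m SA vA B ∧ s ∈ perp B.1} * 2 ^ (n / 2) ≤
      Nat.card {B // Rel n m SA vA B} := by
  rcases isEmpty_or_nonempty {B // Rel n m SA vA B ∧ s ∈ perp B.1} with hempty | ⟨B₀, hB₀, hsB₀⟩
  · simp
  have hdim : n / 2 ≤ m := by
    simpa [hB₀.1] using Submodule.finrank_le B₀.1
  obtain ⟨y, hyA, hyB, hy0⟩ := hB₀.exists_common_direction
  obtain ⟨w, hwA, hw0, hsw⟩ := exists_mem_dotProduct_eq_one hs hyA hy0 (hsB₀ y hyB)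
  let pair := fun r => (dotProductEquiv (ZMod 2) (Fin m) r).toAffineMap
  have hpair : ∀ r x, (pair r).linear x = r ⬝ᵥ x := fun _ _ => rfl
  refine card_rel_and_mul_two_pow_le (Nat.add_sub_of_le hdim).le (fun B t => t ∈ perp B.1)
    (N := {t | t ⬝ᵥ w = 1}) ?_ (fun t ht => ?_) fun B hB => ?_
  · have hu : (pair w).linear s = 1 := by rw [hpair, dotProduct_comm, hsw]
    simpa [pair, dotProduct_comm w] using two_mul_ncard_affineMap_eq (pair w) hu 1
  · have hw : (pair (s - t)).linear w = 0 := by rw [hpair, sub_dotProduct, hsw, ht, sub_self]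
    have htranspose : ∀ x, t ⬝ᵥ (shear _ hw).linear x = s ⬝ᵥ x := fun x => by
      rw [shear_linear_apply, hpair, dotProduct_add, dotProduct_smul, ht, smul_eq_mul, mul_one,
        ← add_dotProduct, add_sub_cancel]
    refine ⟨shear _ hw, shear_mem_cosetPart_of_mem hw hwA hw0, fun B hsB => ?_⟩
    rintro _ ⟨x, hx, rfl⟩
    exact (htranspose x).trans (hsB x hx)
  · exact (two_mul_ncard_perp_dotProduct_eq_one_le B.1 w).trans_eq
      (by rw [ncard_perp, hB.1, Fintype.card_fin])

end Related

theorem stmt10_general (n m c : ℕ) [NeZero m] (hc : c ≤ n / 2) (hcm : c + n / 2 ≤ m)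
    (SA : Submodule (ZMod 2) (Fin m → ZMod 2)) (vA : Fin m → ZMod 2)
    (b : Bool) (s : Fin m → ZMod 2)
    (hs : if b then s ∉ perp SA else s ∉ coset SA vA) :
    Nat.card {B : Submodule (ZMod 2) (Fin m → ZMod 2) × (Fin m → ZMod 2) //
        Rel n m SA vA B ∧ (if b then s ∈ perp B.1 else s ∈ coset B.1 B.2)} * 2 ^ c
      ≤ Nat.card {B : Submodule (ZMod 2) (Fin m → ZMod 2) × (Fin m → ZMod 2) //
        Rel n m SA vA B} := by
  cases b with
  | false => exact card_rel_mem_coset_mul_two_pow_le hcm hs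
  | true =>
    exact (Nat.mul_le_mul_left _ (Nat.pow_le_pow_right two_pos hc)).trans
      (card_rel_mem_perp_mul_two_pow_le hs)

/-- For fixed balanced n/2-dimensional A = S_A + v_A in 𝔽₂^{3n/4} (ambient dimension
m = 3n/4) and fixed (b, s) with s ∉ A (if b = false) resp. s ∉ S_A^⊥ (if b = true):
among uniformly random B related to A, the probability that s ∈ B (resp. s ∈ S_B^⊥)
is at most 2^{−n/4}. -/
theorem stmt10 (n m : ℕ) [NeZero m] (hm : 4 * m = 3 * n) (h4 : 4 ∣ n) (hn : 8 ≤ n)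
    (SA : Submodule (ZMod 2) (Fin m → ZMod 2)) (vA : Fin m → ZMod 2)
    (hSA : Module.finrank (ZMod 2) SA = n / 2)
    (hAbal : Nat.card (cosetPart SA vA 0 0) * 2 = Nat.card (coset SA vA))
    (b : Bool) (s : Fin m → ZMod 2)
    (hs : if b then s ∉ perp SA else s ∉ coset SA vA) :
    Nat.card {B : Submodule (ZMod 2) (Fin m → ZMod 2) × (Fin m → ZMod 2) //
        Rel n m SA vA B ∧ (if b then s ∈ perp B.1 else s ∈ coset B.1 B.2)} * 2 ^ (n / 4)
      ≤ Nat.card {B : Submodule (ZMod 2) (Fin m → ZMod 2) × (Fin m → ZMod 2) //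
        Rel n m SA vA B} :=
  stmt10_general n m (n / 4) (by omega) (by omega) SA vA b s hs

end Stmt10
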